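/- Let N = M ≥ 2 and consider the softmax reward with inner temperature t and outer temperature τ. If t > 0 and τ ≥ 0, then the heterogeneity gain satisfies ΔR(t,τ;N) ≥ max{σ(t,N) − σ(τ,N), 0}, where σ(t,N) = e^t/(e^t + N − 1). -/

import Mathlib

open Finset

/-- An N×M allocation matrix is admissible if all entries are nonnegative and
every agent's (row's) efforts sum to 1. -/
def Admissible {N M : ℕ} (A : Fin N → Fin M → ℝ) : Prop :=
  (∀ i j, 0 ≤ A i j) ∧ ∀ i, ∑ j, A i j = 1

/-- An allocation is homogeneous if all rows coincide. -/
def Homogeneous {N M : ℕ} (A : Fin N → Fin M → ℝ) : Prop :=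
  ∀ i i' : Fin N, A i = A i'

/-- The column of task `j`. -/
def col {N M : ℕ} (A : Fin N → Fin M → ℝ) (j : Fin M) : Fin N → ℝ :=
  fun i => A i j

/-- Softmax inner aggregator with temperature `t`: the task score
`T_j(A) = Σ_i (e^{t·r_{ij}} / Σ_ℓ e^{t·r_{ℓj}}) · r_{ij}` applied to a column. -/
noncomputable def innerScore (t : ℝ) {N : ℕ} (a : Fin N → ℝ) : ℝ :=
  ∑ i, Real.exp (t * a i) / (∑ l, Real.exp (t * a l)) * a i

/-- Softmax team reward with inner temperature `t` and outer temperature `τ`: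
`R(A) = Σ_j (e^{τ·T_j} / Σ_ℓ e^{τ·T_ℓ}) · T_j`. -/
noncomputable def softReward (t τ : ℝ) {N : ℕ} (A : Fin N → Fin N → ℝ) : ℝ :=
  ∑ j, Real.exp (τ * innerScore t (col A j)) /
      (∑ l, Real.exp (τ * innerScore t (col A l))) * innerScore t (col A j)

/-- `σ(t,N) = e^t / (e^t + N − 1)`. -/
noncomputable def sigma' (t : ℝ) (N : ℕ) : ℝ :=
  Real.exp t / (Real.exp t + N - 1)

/-- Heterogeneity gain `ΔR(t,τ;N) = R_het − R_hom` for the softmax reward. -/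
noncomputable def hetGain (t τ : ℝ) (N : ℕ) : ℝ :=
  sSup {r : ℝ | ∃ A : Fin N → Fin N → ℝ, Admissible A ∧ softReward t τ A = r} -
    sSup {r : ℝ | ∃ A : Fin N → Fin N → ℝ,
      Admissible A ∧ Homogeneous A ∧ softReward t τ A = r}

theorem innerScore_eq_div (t : ℝ) {N : ℕ} (a : Fin N → ℝ) :
    innerScore t a = (∑ i, Real.exp (t * a i) * a i) / ∑ i, Real.exp (t * a i) := by
  rw [innerScore, Finset.sum_div]
  exact Finset.sum_congr rfl fun i _ => div_mul_eq_mul_div _ _ _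

theorem sum_exp_pos (t : ℝ) {N : ℕ} (hN : 0 < N) (a : Fin N → ℝ) :
    0 < ∑ i, Real.exp (t * a i) := by
  have : Nonempty (Fin N) := ⟨⟨0, hN⟩⟩
  exact Finset.sum_pos (fun i _ => Real.exp_pos _) Finset.univ_nonempty

theorem innerScore_le (t : ℝ) {N : ℕ} (hN : 0 < N) {a : Fin N → ℝ} {c : ℝ}
    (ha : ∀ i, a i ≤ c) : innerScore t a ≤ c := by
  rw [innerScore_eq_div, div_le_iff₀ (sum_exp_pos t hN a), Finset.mul_sum]
  refine Finset.sum_le_sum fun i _ => ?_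
  nlinarith [Real.exp_pos (t * a i), ha i]

theorem innerScore_const (t : ℝ) {N : ℕ} (hN : 0 < N) (c : ℝ) :
    innerScore t (fun _ : Fin N => c) = c := by
  rw [innerScore_eq_div, ← Finset.sum_mul]
  exact mul_div_cancel_left₀ _ (sum_exp_pos t hN _).ne'

theorem innerScore_indicator (t : ℝ) {N : ℕ} (j : Fin N) :
    innerScore t (fun i => if i = j then 1 else 0) = sigma' t N := by
  have hN : 1 ≤ N := j.pos
  have h : ∀ i : Fin N, Real.exp (t * if i = j then 1 else 0)
      = (if i = j then Real.exp t - 1 else 0) + 1 := by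
    intro i
    split_ifs <;> simp
  rw [innerScore_eq_div, sigma']
  congr 1
  · simp
  · simp_rw [h]
    rw [Finset.sum_add_distrib]
    simp
    ring

/-- The function `x ↦ e^{τx}(x - σ)` lies below its chord on `[0, 1]`. -/
theorem exp_mul_sub_sigma_le {N : ℕ} (hN : 1 ≤ N) {τ x : ℝ} (hτ : 0 ≤ τ) (hx0 : 0 ≤ x)
    (hx1 : x ≤ 1) :
    Real.exp (τ * x) * (x - sigma' τ N) ≤ sigma' τ N * (N * x - 1) := by
  have hN' : (1 : ℝ) ≤ N := by exact_mod_cast hN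
  have hE : 1 ≤ Real.exp τ := Real.one_le_exp hτ
  have hD : 0 < Real.exp τ + N - 1 := by linarith
  have hs : sigma' τ N * (Real.exp τ + N - 1) = Real.exp τ := div_mul_cancel₀ _ hD.ne'
  have hNs : 1 ≤ N * sigma' τ N := by
    rw [sigma', mul_div_assoc', le_div_iff₀ hD]
    nlinarith
  generalize sigma' τ N = s at *
  rcases le_or_gt x s with h | h
  · have h1 : 1 ≤ Real.exp (τ * x) := Real.one_le_exp (by positivity)
    nlinarith
  · have h1 : Real.exp (τ * x) ≤ Real.exp τ :=
      Real.exp_le_exp.2 (mul_le_of_le_one_right hτ hx1)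
    have h2 : Real.exp (τ * x) * (x - s) ≤ Real.exp τ * (x - s) :=
      mul_le_mul_of_nonneg_right h1 (by linarith)
    refine h2.trans (le_of_mul_le_mul_right ?_ (show 0 < 1 - s by linarith))
    have hs0 : 0 < s := by nlinarith
    have h3 : Real.exp τ * (1 - s) = (N - 1) * s := by linarith
    have h4 : 0 ≤ s * ((1 - x) * (N * s - 1)) :=
      mul_nonneg hs0.le (mul_nonneg (by linarith) (by linarith))
    calc Real.exp τ * (x - s) * (1 - s) = (N - 1) * s * (x - s) := by rw [← h3]; ring
      _ ≤ s * (N * x - 1) * (1 - s) := by nlinarith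

theorem innerScore_le_sigma {N : ℕ} (hN : 1 ≤ N) {τ : ℝ} (hτ : 0 ≤ τ) {c : Fin N → ℝ}
    (hc : ∀ j, 0 ≤ c j) (hsum : ∑ j, c j = 1) : innerScore τ c ≤ sigma' τ N := by
  have hc1 : ∀ j, c j ≤ 1 := fun j =>
    hsum ▸ Finset.single_le_sum (fun i _ => hc i) (Finset.mem_univ j)
  have h := Finset.sum_le_sum fun j (_ : j ∈ Finset.univ) =>
    exp_mul_sub_sigma_le hN hτ (hc j) (hc1 j)
  have h0 : ∑ j, sigma' τ N * (N * c j - 1) = 0 := by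
    rw [← Finset.mul_sum, Finset.sum_sub_distrib, ← Finset.mul_sum, hsum]
    simp
  simp_rw [h0, mul_sub, Finset.sum_sub_distrib, ← Finset.sum_mul] at h
  rw [innerScore_eq_div, div_le_iff₀ (sum_exp_pos τ hN c)]
  linarith

theorem softReward_eq_innerScore (t τ : ℝ) {N : ℕ} (A : Fin N → Fin N → ℝ) :
    softReward t τ A = innerScore τ fun j => innerScore t (col A j) := rfl

theorem Admissible.le_one {N M : ℕ} {A : Fin N → Fin M → ℝ} (hA : Admissible A)
    (i : Fin N) (j : Fin M) : A i j ≤ 1 :=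
  hA.2 i ▸ Finset.single_le_sum (fun k _ => hA.1 i k) (Finset.mem_univ j)

theorem Admissible.softReward_le_one {N : ℕ} (hN : 0 < N) (t τ : ℝ) {A : Fin N → Fin N → ℝ}
    (hA : Admissible A) : softReward t τ A ≤ 1 :=
  innerScore_le τ hN fun j => innerScore_le t hN fun i => hA.le_one i j

theorem Homogeneous.softReward_le_sigma {N : ℕ} (hN : 0 < N) (t : ℝ) {τ : ℝ} (hτ : 0 ≤ τ)
    {A : Fin N → Fin N → ℝ} (hA : Admissible A) (hom : Homogeneous A) :
    softReward t τ A ≤ sigma' τ N := by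
  have h : (fun j => innerScore t (col A j)) = A ⟨0, hN⟩ := by
    funext j
    have hcol : col A j = fun _ => A ⟨0, hN⟩ j := funext fun i => congrFun (hom i _) j
    rw [hcol, innerScore_const t hN]
  rw [softReward_eq_innerScore, h]
  exact innerScore_le_sigma hN hτ (hA.1 _) (hA.2 _)

theorem softReward_identity {N : ℕ} (hN : 0 < N) (t τ : ℝ) :
    softReward t τ (fun i j : Fin N => if i = j then 1 else 0) = sigma' t N := by
  have h : (fun j => innerScore t (col (fun i j : Fin N => if i = j then 1 else 0) j))
      = fun _ => sigma' t N := funext fun j => innerScore_indicator t j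
  rw [softReward_eq_innerScore, h, innerScore_const τ hN]

/-- Softmax heterogeneity gain, `t > 0`, `τ ≥ 0` case: for
`N = M ≥ 2`, `ΔR(t,τ;N) ≥ max{σ(t,N) − σ(τ,N), 0}`. -/
theorem stmt5 (N : ℕ) (hN : 2 ≤ N) (t τ : ℝ) (ht : 0 < t) (hτ : 0 ≤ τ) :
    max (sigma' t N - sigma' τ N) 0 ≤ hetGain t τ N := by
  have hN0 : 0 < N := by omega
  have hbdd : BddAbove {r : ℝ | ∃ A : Fin N → Fin N → ℝ,
      Admissible A ∧ softReward t τ A = r} := by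
    refine ⟨1, ?_⟩
    rintro r ⟨A, hA, rfl⟩
    exact hA.softReward_le_one hN0 t τ
  have hne : {r : ℝ | ∃ A : Fin N → Fin N → ℝ,
      Admissible A ∧ Homogeneous A ∧ softReward t τ A = r}.Nonempty :=
    ⟨_, fun _ j => if j = ⟨0, hN0⟩ then 1 else 0,
      ⟨fun _ j => by positivity, fun _ => by simp⟩, fun _ _ => rfl, rfl⟩
  rw [hetGain]
  refine max_le (sub_le_sub (le_csSup hbdd ?_) (csSup_le hne ?_)) (sub_nonneg.2 ?_)
  · exact ⟨_, ⟨fun i j => by positivity, fun _ => by simp⟩, softReward_identity hN0 t τ⟩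
  · rintro r ⟨A, hA, hom, rfl⟩
    exact hom.softReward_le_sigma hN0 t hτ hA
  · refine csSup_le_csSup hbdd hne ?_
    rintro r ⟨A, hA, -, hr⟩
    exact ⟨A, hA, hr⟩
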